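/- arXiv:2201.12034 — 3 statements merged into one kernel-verified Lean document; each statement's English description precedes it below -/
import Mathlib

section
/- Let k ≥ 2, let H = (V, E) be a k-uniform hypergraph with at least one edge, let (ρ, y) be a normalized positive eigenpair of H, and let S ⊆ V satisfy |e ∩ S| ≤ 1 for every edge e ∈ E. Then Σ_{i ∈ S} y_i^k = 1/k if and only if every edge e ∈ E satisfies |e ∩ S| = 1 (i.e., S is a color class of a k-partite structure on H). -/
open Finset

/-! Write `w(e) = ∏_{v ∈ e} y_v`. Multiplying the eigenvalue equation at `i` by `y_i` and summing
over `i ∈ T` gives, by double counting, `ρ ∑_{i ∈ T} y_i^k = ∑_e |e ∩ T| w(e)`. For `T = V` the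
right-hand side is `k ∑_e w(e)`, so `k ∑_{i ∈ S} y_i^k = ∑_{v ∈ V} y_v^k` says exactly that
`∑_e |e ∩ S| w(e) = ∑_e w(e)`. As `|e ∩ S| ≤ 1` and `w(e) > 0`, this is an equality edge by edge. -/

section WeightedSums

variable {ι V M : Type*} [AddCommMonoid M]

theorem sum_sum_filter_mem_eq_sum_card_inter_nsmul [DecidableEq V] (E : Finset (Finset V))
    (T : Finset V) (w : Finset V → M) :
    ∑ i ∈ T, ∑ e ∈ E with i ∈ e, w e = ∑ e ∈ E, #(e ∩ T) • w e := by
  simp only [sum_filter]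
  rw [sum_comm]
  refine sum_congr rfl fun e _ ↦ ?_
  rw [← sum_filter, sum_const, filter_mem_eq_inter, inter_comm]

theorem sum_nsmul_eq_sum_iff_of_le_one [PartialOrder M] [IsOrderedCancelAddMonoid M]
    {s : Finset ι} {c : ι → ℕ} {w : ι → M} (hc : ∀ i ∈ s, c i ≤ 1) (hw : ∀ i ∈ s, 0 < w i) :
    ∑ i ∈ s, c i • w i = ∑ i ∈ s, w i ↔ ∀ i ∈ s, c i = 1 := by
  have hle : ∀ i ∈ s, c i • w i ≤ w i := fun i hi ↦
    (nsmul_le_nsmul_left (hw i hi).le (hc i hi)).trans_eq (one_nsmul _)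
  rw [sum_eq_sum_iff_of_le hle]
  refine forall₂_congr fun i hi ↦ ?_
  obtain hci | hci := Nat.le_one_iff_eq_zero_or_eq_one.mp (hc i hi)
  · simp [hci, (hw i hi).ne]
  · simp [hci]

end WeightedSums

/-- `(ρ, y)` is an eigenpair of the adjacency tensor of the `k`-uniform hypergraph with edge set
`E`. Uniformity of `E` and positivity of `y` are not part of the notion. The subtraction in `k - 1`
is truncated, so the equation has its intended meaning only for `k ≠ 0`. -/
def IsHypergraphEigenpair {V R : Type*} [DecidableEq V] [CommSemiring R] (E : Finset (Finset V))
    (k : ℕ) (ρ : R) (y : V → R) : Prop :=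
  ∀ i, ρ * y i ^ (k - 1) = ∑ e ∈ E with i ∈ e, ∏ v ∈ e.erase i, y v

namespace IsHypergraphEigenpair

variable {V R : Type*} [DecidableEq V] [CommSemiring R] {E : Finset (Finset V)} {k : ℕ} {ρ : R}
  {y : V → R}

theorem mul_pow_eq_sum_prod (h : IsHypergraphEigenpair E k ρ y) (hk : k ≠ 0) (i : V) :
    ρ * y i ^ k = ∑ e ∈ E with i ∈ e, ∏ v ∈ e, y v := by
  rw [← pow_sub_one_mul hk, ← mul_assoc, h i, sum_mul]
  exact sum_congr rfl fun e he ↦ prod_erase_mul e y (mem_filter.mp he).2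

theorem mul_sum_pow_eq_sum_card_inter_nsmul (h : IsHypergraphEigenpair E k ρ y) (hk : k ≠ 0)
    (T : Finset V) :
    ρ * ∑ i ∈ T, y i ^ k = ∑ e ∈ E, #(e ∩ T) • ∏ v ∈ e, y v := by
  simp only [mul_sum, h.mul_pow_eq_sum_prod hk, sum_sum_filter_mem_eq_sum_card_inter_nsmul]

theorem mul_sum_univ_pow_eq [Fintype V] (h : IsHypergraphEigenpair E k ρ y) (hk : k ≠ 0)
    (hE : ∀ e ∈ E, #e = k) :
    ρ * ∑ v, y v ^ k = k * ∑ e ∈ E, ∏ v ∈ e, y v := by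
  rw [h.mul_sum_pow_eq_sum_card_inter_nsmul hk, ← nsmul_eq_mul, ← sum_nsmul]
  exact sum_congr rfl fun e he ↦ by rw [inter_univ, hE e he]

variable [LinearOrder R] [IsStrictOrderedRing R]

theorem eigenvalue_pos (h : IsHypergraphEigenpair E k ρ y) (hk : k ≠ 0) (hy : ∀ v, 0 < y v)
    {e : Finset V} (he : e ∈ E) (hne : e.Nonempty) : 0 < ρ := by
  obtain ⟨i, hi⟩ := hne
  refine pos_of_mul_pos_left ?_ (pow_pos (hy i) k).le
  rw [h.mul_pow_eq_sum_prod hk]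
  exact sum_pos (fun _ _ ↦ prod_pos fun v _ ↦ hy v) ⟨e, mem_filter.mpr ⟨he, hi⟩⟩

theorem mul_sum_pow_eq_sum_univ_pow_iff [Fintype V] (h : IsHypergraphEigenpair E k ρ y)
    (hk : k ≠ 0) (hE : ∀ e ∈ E, #e = k) (hρ : 0 < ρ) (S : Finset V) :
    k * ∑ i ∈ S, y i ^ k = ∑ v, y v ^ k ↔
      ∑ e ∈ E, #(e ∩ S) • ∏ v ∈ e, y v = ∑ e ∈ E, ∏ v ∈ e, y v := by
  have hk' : (0 : R) < k := Nat.cast_pos.mpr hk.pos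
  rw [← mul_left_cancel_iff_of_pos hρ, mul_left_comm, h.mul_sum_pow_eq_sum_card_inter_nsmul hk,
    h.mul_sum_univ_pow_eq hk hE, mul_left_cancel_iff_of_pos hk']

end IsHypergraphEigenpair

theorem hypergraph_independent_set_mass_eq_iff_general {V R : Type*} [Fintype V] [DecidableEq V]
    [CommSemiring R] [LinearOrder R] [IsStrictOrderedRing R] {k : ℕ} (hk : k ≠ 0)
    {E : Finset (Finset V)} (huniform : ∀ e ∈ E, #e = k) (hE : E.Nonempty)
    {ρ : R} {y : V → R} (hy : ∀ v, 0 < y v) (heig : IsHypergraphEigenpair E k ρ y)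
    {S : Finset V} (hS : ∀ e ∈ E, #(e ∩ S) ≤ 1) :
    k * ∑ i ∈ S, y i ^ k = ∑ v, y v ^ k ↔ ∀ e ∈ E, #(e ∩ S) = 1 := by
  obtain ⟨e, he⟩ := hE
  have hne : e.Nonempty := card_ne_zero.mp (huniform e he ▸ hk)
  have hρ : 0 < ρ := heig.eigenvalue_pos hk hy he hne
  rw [heig.mul_sum_pow_eq_sum_univ_pow_iff hk huniform hρ]
  exact sum_nsmul_eq_sum_iff_of_le_one hS fun _ _ ↦ prod_pos fun v _ ↦ hy v

/-- If `S` is a strongly independent set (every edge meets `S` in at most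
one vertex) of a `k`-uniform hypergraph `H = (V, E)` with at least one edge, and `(ρ, y)`
is a normalized positive eigenpair of `H`, then `∑ i ∈ S, y i ^ k = 1/k` if and only if
every edge meets `S` in exactly one vertex (i.e. `S` is a color class of a `k`-partite
structure on `H`). -/
theorem hypergraph_independent_set_mass_eq_iff
    {V : Type*} [Fintype V] [DecidableEq V]
    (k : ℕ) (hk : 2 ≤ k)
    (E : Finset (Finset V)) (huniform : ∀ e ∈ E, e.card = k) (hE : E.Nonempty)
    (ρ : ℝ) (y : V → ℝ) (hy : ∀ v, 0 < y v)
    (heig : ∀ i : V, ρ * y i ^ (k - 1) =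
      ∑ e ∈ E.filter (fun e => i ∈ e), ∏ v ∈ e.erase i, y v)
    (hnorm : ∑ v, y v ^ k = 1)
    (S : Finset V) (hS : ∀ e ∈ E, (e ∩ S).card ≤ 1) :
    (∑ i ∈ S, y i ^ k = 1 / k) ↔ (∀ e ∈ E, (e ∩ S).card = 1) := by
  have hk₀ : k ≠ 0 := by lia
  rw [eq_div_iff (Nat.cast_ne_zero.mpr hk₀), mul_comm, ← hnorm]
  exact hypergraph_independent_set_mass_eq_iff_general hk₀ huniform hE hy heig hS
end

section
/- Let O_R be the 3-uniform hypergraph on vertices {T, B, U, P, Q, R, S} with edges {T,P,Q}, {T,R,S}, {B,Q,R}, {B,P,S}, {U,P,Q}. Let (ρ, y) be a positive eigenpair of O_R satisfying the symmetries y_P = y_Q and y_R = y_S. Then y_Q ≠ y_R. -/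
open Finset

/-- The modified red octahedron `O_R`: the 3-uniform hypergraph on the vertices
`0 = T, 1 = B, 2 = U, 3 = P, 4 = Q, 5 = R, 6 = S` with edges
`{T,P,Q}, {T,R,S}, {B,Q,R}, {B,P,S}, {U,P,Q}`. -/
def redOctahedronEdges : Finset (Finset (Fin 7)) :=
  {{0, 3, 4}, {0, 5, 6}, {1, 4, 5}, {1, 3, 6}, {2, 3, 4}}

/-!
Multiplying the eigenvalue equation at `i` by `y i` makes `ρ * y i ^ 3` the total weight of the
edges through `i`, the weight of an edge being the product of `y` over it. Every edge of `O_R` meets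
each of `{P, R}` and `{Q, S}` in exactly one vertex, so `y P ^ 3 + y R ^ 3 = y Q ^ 3 + y S ^ 3`. If
`y Q = y R`, this forces `y P = y S`, and then the equations at `Q` and `R` differ only by the
contribution `y U * y P > 0` of the edge `{U, P, Q}`.
-/

/-- `(ρ, y)` is an eigenpair of the hypergraph with edge set `E`. For an `r`-uniform hypergraph the
relevant exponent is `k = r - 1`; neither uniformity nor positivity of `y` is built in. -/
def IsEigenpair {V α : Type*} [DecidableEq V] [CommSemiring α] (E : Finset (Finset V)) (k : ℕ)
    (ρ : α) (y : V → α) : Prop :=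
  ∀ i, ρ * y i ^ k = ∑ e ∈ E with i ∈ e, ∏ v ∈ e.erase i, y v

namespace IsEigenpair

variable {V α : Type*} [DecidableEq V] [CommSemiring α] {E : Finset (Finset V)} {k : ℕ} {ρ : α}
  {y : V → α}

theorem mul_pow_succ (h : IsEigenpair E k ρ y) (i : V) :
    ρ * y i ^ (k + 1) = ∑ e ∈ E with i ∈ e, ∏ v ∈ e, y v := by
  rw [pow_succ, ← mul_assoc, h i, sum_mul]
  exact sum_congr rfl fun e he => prod_erase_mul e y (mem_filter.mp he).2

theorem mul_sum_pow_succ (h : IsEigenpair E k ρ y) (A : Finset V) :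
    ρ * ∑ i ∈ A, y i ^ (k + 1) = ∑ e ∈ E, #(A ∩ e) • ∏ v ∈ e, y v := by
  calc ρ * ∑ i ∈ A, y i ^ (k + 1)
    _ = ∑ i ∈ A, ∑ e ∈ E with i ∈ e, ∏ v ∈ e, y v := by simp only [mul_sum, h.mul_pow_succ]
    _ = ∑ e ∈ E, ∑ _i ∈ A ∩ e, ∏ v ∈ e, y v :=
        sum_comm' fun i e => by simp only [mem_filter, mem_inter]; tauto
    _ = ∑ e ∈ E, #(A ∩ e) • ∏ v ∈ e, y v := by simp only [sum_const]

variable [LinearOrder α] [IsStrictOrderedRing α]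

theorem eigenvalue_pos (h : IsEigenpair E k ρ y) (hy : ∀ v, 0 < y v)
    (hE : ∃ e ∈ E, e.Nonempty) : 0 < ρ := by
  obtain ⟨e, he, i, hi⟩ := hE
  have sum_link_pos : 0 < ∑ e ∈ E with i ∈ e, ∏ v ∈ e.erase i, y v :=
    sum_pos (fun _ _ => prod_pos fun v _ => hy v) ⟨e, mem_filter.mpr ⟨he, hi⟩⟩
  rw [← h i] at sum_link_pos
  exact pos_of_mul_pos_left sum_link_pos (pow_pos (hy i) k).le

theorem sum_pow_succ_eq_of_card_inter_eq (h : IsEigenpair E k ρ y) (hy : ∀ v, 0 < y v)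
    (hE : ∃ e ∈ E, e.Nonempty) {A B : Finset V} (hAB : ∀ e ∈ E, #(A ∩ e) = #(B ∩ e)) :
    ∑ i ∈ A, y i ^ (k + 1) = ∑ i ∈ B, y i ^ (k + 1) := by
  apply (strictMono_mul_left_of_pos (h.eigenvalue_pos hy hE)).injective
  simp only [h.mul_sum_pow_succ]
  exact sum_congr rfl fun e he => by rw [hAB e he]

end IsEigenpair

section RedOctahedron

variable {α : Type*} [CommSemiring α]

theorem redOctahedron_sum_link_Q (y : Fin 7 → α) :
    ∑ e ∈ redOctahedronEdges with 4 ∈ e, ∏ v ∈ e.erase 4, y v =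
      y 0 * y 3 + y 1 * y 5 + y 2 * y 3 := by
  simp +decide [redOctahedronEdges, sum_filter, erase_insert_of_ne, add_assoc]

theorem redOctahedron_sum_link_R (y : Fin 7 → α) :
    ∑ e ∈ redOctahedronEdges with 5 ∈ e, ∏ v ∈ e.erase 5, y v = y 0 * y 6 + y 1 * y 4 := by
  simp +decide [redOctahedronEdges, sum_filter, erase_insert_of_ne]

variable [LinearOrder α] [IsStrictOrderedRing α] {ρ : α} {y : Fin 7 → α}

theorem redOctahedron_cube_P_add_cube_R (h : IsEigenpair redOctahedronEdges 2 ρ y)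
    (hy : ∀ v, 0 < y v) : y 3 ^ 3 + y 5 ^ 3 = y 4 ^ 3 + y 6 ^ 3 := by
  have card_inter : ∀ e ∈ redOctahedronEdges, #({3, 5} ∩ e) = #({4, 6} ∩ e) := by
    simp only [redOctahedronEdges, forall_mem_insert, mem_singleton, forall_eq]
    decide
  simpa using h.sum_pow_succ_eq_of_card_inter_eq hy (by decide) card_inter

theorem redOctahedron_P_eq_S_of_Q_eq_R (h : IsEigenpair redOctahedronEdges 2 ρ y)
    (hy : ∀ v, 0 < y v) (hQR : y 4 = y 5) : y 3 = y 6 := by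
  have cubes := redOctahedron_cube_P_add_cube_R h hy
  rw [hQR, add_comm] at cubes
  exact (pow_left_inj₀ (hy 3).le (hy 6).le three_ne_zero).mp (add_left_cancel cubes)

theorem redOctahedron_Q_ne_R_general (h : IsEigenpair redOctahedronEdges 2 ρ y)
    (hy : ∀ v, 0 < y v) : y 4 ≠ y 5 := by
  intro hQR
  have hPS : y 3 = y 6 := redOctahedron_P_eq_S_of_Q_eq_R h hy hQR
  have link_eq : y 0 * y 3 + y 1 * y 5 + y 2 * y 3 = y 0 * y 6 + y 1 * y 4 := by
    rw [← redOctahedron_sum_link_Q, ← redOctahedron_sum_link_R, ← h 4, ← h 5, hQR]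
  rw [hPS, hQR] at link_eq
  exact (mul_pos (hy 2) (hy 6)).ne' (add_eq_left.mp link_eq)

end RedOctahedron

/-- For any positive eigenpair `(ρ, y)` of `O_R` satisfying the
symmetries `y P = y Q` and `y R = y S`, one has `y Q ≠ y R`. -/
theorem redOctahedron_Q_ne_R
    (ρ : ℝ) (y : Fin 7 → ℝ) (hy : ∀ v, 0 < y v)
    (heig : ∀ i : Fin 7, ρ * y i ^ 2 =
      ∑ e ∈ redOctahedronEdges.filter (fun e => i ∈ e), ∏ v ∈ e.erase i, y v)
    (hPQ : y 3 = y 4) (hRS : y 5 = y 6) :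
    y 4 ≠ y 5 := by
  exact redOctahedron_Q_ne_R_general heig hy
end

section
/- Fix an integer k ≥ 1. For every ε > 0 there exists N such that for all η ≥ N the following holds: if x is a strictly positive vector with A x = λ x (A the adjacency matrix of the windmill graph W(η, k), λ ∈ ℝ) and Σ_v x_v² = 1, then |x_c² − 1/2| < ε, where c is the center vertex. In other words, as η → ∞ the squared principal-eigenvector entry of the center of W(η, k) tends to 1/2. -/
open Finset Matrix

/-- The windmill graph `W(η, k)`: `η` pairwise vertex-disjoint copies of the complete
graph `K_k` (the vertices `some (i, j)` with block index `i`), together with a center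
vertex `none` adjacent to every other vertex. -/
def windmill (η k : ℕ) : SimpleGraph (Option (Fin η × Fin k)) where
  Adj u v := u ≠ v ∧ (u = none ∨ v = none ∨ ∃ i a b, u = some (i, a) ∧ v = some (i, b))
  symm := by
    constructor
    rintro u v ⟨hne, h⟩
    refine ⟨Ne.symm hne, ?_⟩
    rcases h with h | h | ⟨i, a, b, hu, hv⟩
    · exact Or.inr (Or.inl h)
    · exact Or.inl h
    · exact Or.inr (Or.inr ⟨i, b, a, hv, hu⟩)
  loopless := by constructor; rintro u ⟨hne, -⟩; exact hne rfl

/-!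
Let `c ≠ 0` be the center entry of an eigenvector for `λ`, and put `μ = λ + 1 - k`. Summing the rows
of each block and comparing with the center row gives `λ μ = η k`; in particular `λ ≠ -1` once
`η ≠ 1`. Then the eigenvector is constant on each block, its entries `y` there satisfy `μ y = c`,
and normalization becomes `(λ + μ) c² = μ`. Since `λ - μ = k - 1`, we get
`(λ + μ)² = (k - 1)² + 4 η k`, hence
`|c² - 1/2| = |λ - μ| / (2 |λ + μ|) = (k - 1) / (2 √((k - 1)² + 4 η k))`, which tends to `0`.
-/

open Filter Topology

namespace windmill

variable {η k : ℕ}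

section Adjacency

@[simp]
lemma adj_none_some (p : Fin η × Fin k) : (windmill η k).Adj none (some p) := by
  simp [windmill]

@[simp]
lemma adj_some_some {i j : Fin η} {a b : Fin k} :
    (windmill η k).Adj (some (i, a)) (some (j, b)) ↔ i = j ∧ a ≠ b := by
  simp only [windmill]
  grind

end Adjacency

section Rows

variable {R : Type*} [NonAssocSemiring R] [DecidableRel (windmill η k).Adj]

lemma adjMatrix_mulVec_none (x : Option (Fin η × Fin k) → R) :
    ((windmill η k).adjMatrix R *ᵥ x) none = ∑ p, x (some p) := by
  simp [mulVec, dotProduct, SimpleGraph.adjMatrix_apply]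

lemma adjMatrix_mulVec_some (x : Option (Fin η × Fin k) → R) (i : Fin η) (a : Fin k) :
    ((windmill η k).adjMatrix R *ᵥ x) (some (i, a)) =
      x none + ∑ b ∈ univ.erase a, x (some (i, b)) := by
  have other_blocks (j : Fin η) (hj : j ≠ i) :
      ∑ b, (if i = j ∧ a ≠ b then x (some (j, b)) else 0) = 0 := by
    simp [hj.symm]
  simp only [mulVec, dotProduct, SimpleGraph.adjMatrix_apply, Fintype.sum_option,
    Fintype.sum_prod_type, adj_some_some, (adj_none_some _).symm, if_true, one_mul, ite_mul,
    zero_mul]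
  rw [Fintype.sum_eq_single i other_blocks, ← filter_ne univ a, sum_filter]
  simp only [true_and]

variable {lam : R} {x : Option (Fin η × Fin k) → R}

lemma sum_some_eq_mul_center (hx : (windmill η k).adjMatrix R *ᵥ x = lam • x) :
    ∑ p, x (some p) = lam * x none := by
  rw [← adjMatrix_mulVec_none, hx, Pi.smul_apply, smul_eq_mul]

lemma center_add_sum_block (hx : (windmill η k).adjMatrix R *ᵥ x = lam • x)
    (i : Fin η) (a : Fin k) :
    x none + ∑ b, x (some (i, b)) = (lam + 1) * x (some (i, a)) := by
  have row : x none + ∑ b ∈ univ.erase a, x (some (i, b)) = lam * x (some (i, a)) := by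
    rw [← adjMatrix_mulVec_some, hx, Pi.smul_apply, smul_eq_mul]
  rw [← sum_erase_add _ _ (mem_univ a), ← add_assoc, row, add_one_mul]

end Rows

section Eigenvector

variable {R : Type*} [CommRing R] [DecidableRel (windmill η k).Adj]
  {lam : R} {x : Option (Fin η × Fin k) → R}

lemma mul_sum_block (hx : (windmill η k).adjMatrix R *ᵥ x = lam • x) (i : Fin η) :
    (lam + 1 - k) * ∑ a, x (some (i, a)) = k * x none := by
  have sum_rows : k * (x none + ∑ b, x (some (i, b))) = (lam + 1) * ∑ a, x (some (i, a)) := by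
    simp [mul_sum _ _ (lam + 1), ← center_add_sum_block hx, mul_add]
  linear_combination -sum_rows

variable [IsDomain R]

lemma eigenvalue_mul (hx : (windmill η k).adjMatrix R *ᵥ x = lam • x) (hc : x none ≠ 0) :
    lam * (lam + 1 - k) = η * k := by
  refine mul_right_cancel₀ hc ?_
  calc lam * (lam + 1 - k) * x none
      = (lam + 1 - k) * ∑ p, x (some p) := by rw [sum_some_eq_mul_center hx]; ring
    _ = ∑ _i : Fin η, k * x none := by
      simp only [Fintype.sum_prod_type, mul_sum univ (fun i ↦ ∑ a, x (some (i, a))),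
        mul_sum_block hx]
    _ = η * k * x none := by simp [mul_assoc]

lemma eigenvalue_ne_neg_one [CharZero R] (hx : (windmill η k).adjMatrix R *ᵥ x = lam • x)
    (hc : x none ≠ 0) (hk : k ≠ 0) (hη : η ≠ 1) : lam ≠ -1 := by
  rintro rfl
  have hηk : ((η * k : ℕ) : R) = (1 * k : ℕ) := by
    push_cast
    linear_combination -eigenvalue_mul hx hc
  exact hη (Nat.eq_of_mul_eq_mul_right (Nat.pos_of_ne_zero hk) (Nat.cast_injective hηk))

lemma mul_some_eq_center (hx : (windmill η k).adjMatrix R *ᵥ x = lam • x) (hlam : lam ≠ -1)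
    (p : Fin η × Fin k) : (lam + 1 - k) * x (some p) = x none := by
  obtain ⟨i, a⟩ := p
  have block_const (b : Fin k) : x (some (i, b)) = x (some (i, a)) :=
    mul_left_cancel₀ (mt eq_neg_of_add_eq_zero_left hlam)
      ((center_add_sum_block hx i b).symm.trans (center_add_sum_block hx i a))
  have row := center_add_sum_block hx i a
  simp only [block_const, sum_const, card_univ, Fintype.card_fin, nsmul_eq_mul] at row
  linear_combination -row

lemma mul_sum_some_sq (hx : (windmill η k).adjMatrix R *ᵥ x = lam • x) (hlam : lam ≠ -1) :
    (lam + 1 - k) * ∑ p, x (some p) ^ 2 = lam * x none ^ 2 :=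
  calc (lam + 1 - k) * ∑ p, x (some p) ^ 2
      = ∑ p, x none * x (some p) := by
        simp only [mul_sum, sq, ← mul_assoc, mul_some_eq_center hx hlam]
    _ = lam * x none ^ 2 := by rw [← mul_sum, sum_some_eq_mul_center hx]; ring

lemma sq_two_mul_center_sq_sub_one (hx : (windmill η k).adjMatrix R *ᵥ x = lam • x)
    (hc : x none ≠ 0) (hlam : lam ≠ -1) (hnorm : ∑ v, x v ^ 2 = 1) :
    (2 * x none ^ 2 - 1) ^ 2 * ((k - 1) ^ 2 + 4 * η * k) = ((k : R) - 1) ^ 2 := by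
  have hdisc : ((k : R) - 1) ^ 2 + 4 * η * k = (lam + (lam + 1 - k)) ^ 2 := by
    linear_combination -4 * eigenvalue_mul hx hc
  have hmass : (2 * x none ^ 2 - 1) * (lam + (lam + 1 - k)) = 1 - k := by
    rw [Fintype.sum_option] at hnorm
    linear_combination 2 * (lam + 1 - k) * hnorm - 2 * mul_sum_some_sq hx hlam
  rw [hdisc, ← mul_pow, hmass]
  ring

end Eigenvector

lemma abs_center_sq_sub_half [DecidableRel (windmill η k).Adj] {lam : ℝ}
    {x : Option (Fin η × Fin k) → ℝ} (hx : (windmill η k).adjMatrix ℝ *ᵥ x = lam • x)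
    (hc : x none ≠ 0) (hnorm : ∑ v, x v ^ 2 = 1) (hk : 1 ≤ k) (hη : 1 < η) :
    |x none ^ 2 - 1 / 2| = (k - 1) / (2 * √((k - 1) ^ 2 + 4 * η * k)) := by
  have hlam : lam ≠ -1 := eigenvalue_ne_neg_one hx hc (by lia) hη.ne'
  have hk' : (0 : ℝ) ≤ k - 1 := sub_nonneg.mpr (Nat.one_le_cast.mpr hk)
  have hdisc : 0 < ((k : ℝ) - 1) ^ 2 + 4 * η * k := by positivity
  have key : |2 * x none ^ 2 - 1| * √((k - 1) ^ 2 + 4 * η * k) = k - 1 := by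
    rw [← Real.sqrt_sq_eq_abs, ← Real.sqrt_mul (sq_nonneg _),
      sq_two_mul_center_sq_sub_one hx hc hlam hnorm, Real.sqrt_sq hk']
  rw [show x none ^ 2 - 1 / 2 = (2 * x none ^ 2 - 1) / 2 by ring, abs_div, abs_two,
    eq_div_iff (mul_pos two_pos (Real.sqrt_pos.mpr hdisc)).ne']
  linear_combination key

lemma tendsto_center_deviation (hk : 0 < k) :
    Tendsto (fun η : ℕ ↦ ((k : ℝ) - 1) / (2 * √((k - 1) ^ 2 + 4 * η * k))) atTop (𝓝 0) := by
  have hdisc : Tendsto (fun η : ℕ ↦ ((k : ℝ) - 1) ^ 2 + 4 * η * k) atTop atTop :=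
    tendsto_atTop_add_const_left _ _ <|
      (tendsto_natCast_atTop_atTop.const_mul_atTop four_pos).atTop_mul_const (Nat.cast_pos.mpr hk)
  exact ((Real.tendsto_sqrt_atTop.comp hdisc).const_mul_atTop two_pos).const_div_atTop _

end windmill

theorem windmill_center_mass_tendsto_half_general (k : ℕ) (hk : 1 ≤ k) :
    ∀ ε : ℝ, 0 < ε → ∃ N : ℕ, ∀ η : ℕ, N ≤ η →
      ∀ [DecidableRel (windmill η k).Adj] (lam : ℝ) (x : Option (Fin η × Fin k) → ℝ),
        x none ≠ 0 → (windmill η k).adjMatrix ℝ *ᵥ x = lam • x → ∑ v, x v ^ 2 = 1 →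
          |x none ^ 2 - 1 / 2| < ε := by
  intro ε hε
  obtain ⟨N, hN⟩ := eventually_atTop.mp <|
    ((windmill.tendsto_center_deviation hk).eventually_lt_const hε).and (eventually_gt_atTop 1)
  refine ⟨N, fun η hη _ lam x hc hx hnorm ↦ ?_⟩
  obtain ⟨hsmall, hη1⟩ := hN η hη
  rwa [windmill.abs_center_sq_sub_half hx hc hnorm hk hη1]

/-- Fix `k ≥ 1`.  As `η → ∞`, the squared entry at the center vertex of
any strictly positive `ℓ²`-normalized eigenvector of the adjacency matrix of the windmill
graph `W(η, k)` tends to `1/2`. -/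
theorem windmill_center_mass_tendsto_half
    (k : ℕ) (hk : 1 ≤ k) :
    ∀ ε : ℝ, 0 < ε → ∃ N : ℕ, ∀ η : ℕ, N ≤ η →
      ∀ (lam : ℝ) (x : Option (Fin η × Fin k) → ℝ),
        (∀ v, 0 < x v) →
        (letI : DecidableRel (windmill η k).Adj := Classical.decRel _;
          (windmill η k).adjMatrix ℝ *ᵥ x = lam • x) →
        (∑ v, x v ^ 2 = 1) →
        |x none ^ 2 - 1 / 2| < ε := by
  intro ε hε
  obtain ⟨N, hN⟩ := windmill_center_mass_tendsto_half_general k hk ε hε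
  exact ⟨N, fun η hη lam x hpos ↦ @hN η hη (Classical.decRel _) lam x (hpos none).ne'⟩
end
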